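/- For all (α,β,γ) ∈ [0,1]³, T_min(α,β,γ) = 0 if and only if (α,β,γ) ∈ [0,1]³ \ R. -/

import Mathlib

/-!
Outside `R` one of the inequalities fails, say `α * β + γ ≤ 1`. Take a single vertex `c` in `C`,
adjacent to weight `β` of `A` and weight `α` of `B`; all pairs in `A × B` other than those inside
the neighbourhood of `c` may be edges, and they have density `1 - α * β ≥ γ`. Thinning them to
density `γ` gives a triangle-free member of `Tri(α, β, γ)` (`zeroGraph_spec`).

Inside `R` the triangle density must be bounded below uniformly over all graphs, since `Tmin` is
an infimum. Suppose it is below `s ^ 2`. By Markov's inequality, the vertices of `A` of triangle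
density more than `s` have total weight at most `s`, and isolating them costs at most `s` in `β`
and `γ` (`trim_density`). For any remaining `a` the rectangle `B_a × C_a` of its neighbourhoods
has edge density at most `s`, so for two vertices `a`, `a'` the density `α - 2 * s` is at most
`1 - |B_a × C_a ∪ B_a' × C_a'|` (`opposite_density`). Write `x a = |C_a|`, `y a = |B_a|`. The
mean of the points `(x a, y a)` lies on or below a chord joining two of them (`exists_chord`),
which reduces the question to two vertices of weights `p`, `1 - p` (`not_region`).

For two vertices (`two_point`): if the degrees are ordered in the same way, then
`α ≤ 1 - β * γ`, against `R`. Otherwise the bound on `α` is affine in the gap of the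
`y`-values and in the gap of the `x`-values, so both gaps can be pushed to their extremes
(`slide`), leaving four explicit configurations in which the inequalities defining `R` are
incompatible (`anti_final`). Since `R` is given by strict inequalities, they survive the loss
of `2 * s`, `s`, `s` for small `s`, and `s ^ 2` is a lower bound (`tri_lower`).
-/

open Finset

/-- A tripartite graph on `n` vertices: each vertex is assigned one of
three classes, adjacency is symmetric, and edges only join distinct classes. -/
structure TriGraph (n : ℕ) where
  cls : Fin n → Fin 3
  adj : Fin n → Fin n → Bool
  symm : ∀ u v, adj u v = adj v u
  tripart : ∀ u v, adj u v = true → cls u ≠ cls v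

/-- The set of vertices in class `i`. -/
def classSet {n : ℕ} (G : TriGraph n) (i : Fin 3) : Finset (Fin n) :=
  Finset.univ.filter (fun v => G.cls v = i)

/-- A weighting of a tripartite graph: weights in `[0,1]` summing to `1`
on each class. -/
structure Weighting {n : ℕ} (G : TriGraph n) where
  w : Fin n → ℝ
  nonneg : ∀ v, 0 ≤ w v
  le_one : ∀ v, w v ≤ 1
  sum_one : ∀ i : Fin 3, ∑ v ∈ classSet G i, w v = 1

/-- Weighted edge density between classes `i` and `j`. -/
noncomputable def edgeDensity {n : ℕ} (G : TriGraph n) (w : Fin n → ℝ) (i j : Fin 3) : ℝ :=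
  ∑ x ∈ classSet G i, ∑ y ∈ classSet G j, if G.adj x y then w x * w y else 0

/-- Weighted triangle density. -/
noncomputable def triDensity {n : ℕ} (G : TriGraph n) (w : Fin n → ℝ) : ℝ :=
  ∑ a ∈ classSet G 0, ∑ b ∈ classSet G 1, ∑ c ∈ classSet G 2,
    if G.adj a b && G.adj a c && G.adj b c then w a * w b * w c else 0

/-- `(G,W) ∈ Tri(α,β,γ)`: the three edge densities are `α` (between B and C),
`β` (between A and C) and `γ` (between A and B), where A, B, C are classes 0, 1, 2. -/
def InTri {n : ℕ} (G : TriGraph n) (W : Weighting G) (α β γ : ℝ) : Prop :=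
  edgeDensity G W.w 1 2 = α ∧ edgeDensity G W.w 0 2 = β ∧ edgeDensity G W.w 0 1 = γ

/-- The minimal triangle density over all weighted tripartite graphs with
edge densities `α, β, γ`. -/
noncomputable def Tmin (α β γ : ℝ) : ℝ :=
  sInf { t : ℝ | ∃ (n : ℕ) (G : TriGraph n) (W : Weighting G),
    InTri G W α β γ ∧ triDensity G W.w = t }

/-- `(G,W)` is extremal: it lies in `Tri(α,β,γ)` and attains `Tmin`. -/
def Extremal {n : ℕ} (G : TriGraph n) (W : Weighting G) (α β γ : ℝ) : Prop :=
  InTri G W α β γ ∧ triDensity G W.w = Tmin α β γ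

/-- `(G,W)` is vertex minimal: no member of `Tri(α,β,γ)` with the same triangle
density has fewer vertices. -/
def VertexMinimal {n : ℕ} (G : TriGraph n) (W : Weighting G) (α β γ : ℝ) : Prop :=
  InTri G W α β γ ∧
    ¬ ∃ (m : ℕ) (G' : TriGraph m) (W' : Weighting G'),
        m < n ∧ InTri G' W' α β γ ∧ triDensity G' W'.w = triDensity G W.w

/-- Membership in the cube `[0,1]³`. -/
def inCube (α β γ : ℝ) : Prop :=
  α ∈ Set.Icc (0:ℝ) 1 ∧ β ∈ Set.Icc (0:ℝ) 1 ∧ γ ∈ Set.Icc (0:ℝ) 1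

/-- The region `R`. -/
def inR (α β γ : ℝ) : Prop :=
  inCube α β γ ∧ 1 < α * β + γ ∧ 1 < α * γ + β ∧ 1 < β * γ + α

/-- The discriminant `Δ(α,β,γ)`. -/
noncomputable def Delta (α β γ : ℝ) : ℝ :=
  α^2 + β^2 + γ^2 - 2*α*β - 2*α*γ - 2*β*γ + 4*α*β*γ

/-- The region `R₁ = {(α,β,γ) ∈ R : Δ ≥ 0}`. -/
def inR1 (α β γ : ℝ) : Prop := inR α β γ ∧ 0 ≤ Delta α β γ

/-- The region `R₂ = R \ R₁`. -/
def inR2 (α β γ : ℝ) : Prop := inR α β γ ∧ Delta α β γ < 0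

/-- Adjacency of a complete tripartite graph minus a given list of (non-)edges. -/
def mkAdj {n : ℕ} (cls : Fin n → Fin 3) (nonEdges : List (ℕ × ℕ)) : Fin n → Fin n → Bool :=
  fun u v => (cls u != cls v) &&
    !(nonEdges.contains (u.val, v.val) || nonEdges.contains (v.val, u.val))

/-- `H₆`: classes A = {0,1}, B = {2,3}, C = {4,5} (vertices aᵢ, bᵢ, cᵢ in order);
the complete tripartite graph `K_{2,2,2}` minus the edges a₂b₁, b₂c₁, a₁c₂. -/
def H6 : TriGraph 6 where
  cls := ![0,0,1,1,2,2]
  adj := mkAdj ![0,0,1,1,2,2] [(1,2),(3,4),(0,5)]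
  symm := by decide
  tripart := by decide

/-- `H₇`: classes A = {0,1}, B = {2,3}, C = {4,5,6};
`K_{2,2,3}` minus the edges a₂b₁, a₁c₂, a₁c₃, b₂c₁, b₂c₂. -/
def H7 : TriGraph 7 where
  cls := ![0,0,1,1,2,2,2]
  adj := mkAdj ![0,0,1,1,2,2,2] [(1,2),(0,5),(0,6),(3,4),(3,5)]
  symm := by decide
  tripart := by decide

/-- `H₇′`: classes A = {0,1}, B = {2,3,4}, C = {5,6};
`K_{2,3,2}` minus the edges a₂b₁, a₁c₂, b₂c₁, b₂c₂, b₃c₁. -/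
def H7' : TriGraph 7 where
  cls := ![0,0,1,1,1,2,2]
  adj := mkAdj ![0,0,1,1,1,2,2] [(1,2),(0,6),(3,5),(3,6),(4,5)]
  symm := by decide
  tripart := by decide

/-- `H₉`: classes A = {0,1,2}, B = {3,4,5}, C = {6,7,8};
`K_{3,3,3}` minus the 9-cycle a₁c₂, c₂b₂, b₂c₁, c₁b₃, b₃a₂, a₂b₁, b₁a₃, a₃c₃, c₃a₁. -/
def H9 : TriGraph 9 where
  cls := ![0,0,0,1,1,1,2,2,2]
  adj := mkAdj ![0,0,0,1,1,1,2,2,2] [(0,7),(4,7),(4,6),(5,6),(1,5),(1,3),(2,3),(2,8),(0,8)]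
  symm := by decide
  tripart := by decide

/-- `F₆`: classes A = {0,1}, B = {2,3}, C = {4,5};
`K_{2,2,2}` minus the edges a₁b₁, a₁c₁, b₁c₁, a₂c₂, b₂c₂. -/
def F6 : TriGraph 6 where
  cls := ![0,0,1,1,2,2]
  adj := mkAdj ![0,0,1,1,2,2] [(0,2),(0,4),(2,4),(1,5),(3,5)]
  symm := by decide
  tripart := by decide

/-- Strong isomorphism of tripartite graphs: a graph isomorphism mapping
vertex classes onto vertex classes. -/
def StronglyIso {n m : ℕ} (G : TriGraph n) (H : TriGraph m) : Prop :=
  ∃ (e : Fin n ≃ Fin m) (σ : Fin 3 ≃ Fin 3),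
    (∀ u v, H.adj (e u) (e v) = G.adj u v) ∧ ∀ v, H.cls (e v) = σ (G.cls v)

/-- A double weighting: a function `p` assigning each edge a value in `(0,1]`. -/
structure DWeight {n : ℕ} (G : TriGraph n) where
  p : Fin n → Fin n → ℝ
  symm : ∀ u v, p u v = p v u
  pos : ∀ u v, G.adj u v = true → 0 < p u v
  le_one : ∀ u v, G.adj u v = true → p u v ≤ 1

/-- Edge density of a doubly-weighted tripartite graph. -/
noncomputable def dEdgeDensity {n : ℕ} (G : TriGraph n) (w : Fin n → ℝ)
    (p : Fin n → Fin n → ℝ) (i j : Fin 3) : ℝ :=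
  ∑ x ∈ classSet G i, ∑ y ∈ classSet G j, if G.adj x y then w x * w y * p x y else 0

/-- Triangle density of a doubly-weighted tripartite graph. -/
noncomputable def dTriDensity {n : ℕ} (G : TriGraph n) (w : Fin n → ℝ)
    (p : Fin n → Fin n → ℝ) : ℝ :=
  ∑ a ∈ classSet G 0, ∑ b ∈ classSet G 1, ∑ c ∈ classSet G 2,
    if G.adj a b && G.adj a c && G.adj b c then
      w a * w b * w c * p a b * p a c * p b c
    else 0

/-- `C_{ab}`: the vertices of class C (class 2) adjacent to both `a` and `b`. -/
def Cset {n : ℕ} (G : TriGraph n) (a b : Fin n) : Finset (Fin n) :=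
  Finset.univ.filter (fun c => G.cls c = 2 ∧ G.adj a c = true ∧ G.adj b c = true)

/-- Edge density of a simple (unweighted) tripartite graph between classes `i` and `j`. -/
noncomputable def simpleEdgeDensity {n : ℕ} (G : TriGraph n) (i j : Fin 3) : ℝ :=
  (∑ x ∈ classSet G i, ∑ y ∈ classSet G j, if G.adj x y then (1:ℝ) else 0) /
    ((classSet G i).card * (classSet G j).card)

/-- Triangle density of a simple (unweighted) tripartite graph. -/
noncomputable def simpleTriDensity {n : ℕ} (G : TriGraph n) : ℝ :=
  (∑ a ∈ classSet G 0, ∑ b ∈ classSet G 1, ∑ c ∈ classSet G 2,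
    if G.adj a b && G.adj a c && G.adj b c then (1:ℝ) else 0) /
    ((classSet G 0).card * (classSet G 1).card * (classSet G 2).card)

/-! ### The inequality for two vertices and the reduction to it -/

/-- For fixed `x1 ≥ x2`, the upper bound for `α` is affine in the gap between the two `y`-values
when their mean is kept. The third inequality of the region forces it to increase with the gap,
so the gap may be enlarged until one of the constraints `0 ≤ z1`, `z2 ≤ 1` is tight. -/
lemma slide {p x1 x2 y1 y2 α : ℝ} (hp0 : 0 ≤ p) (hp1 : p ≤ 1)
    (hx : x2 ≤ x1) (hx2 : 0 ≤ x2) (hy1 : 0 ≤ y1) (hy : y1 ≤ y2) (hy2 : y2 ≤ 1)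
    (hα : α ≤ 1 - x1 * y1 - x2 * y2 + x2 * y1)
    (hR : 1 < (p * x1 + (1 - p) * x2) * (p * y1 + (1 - p) * y2) + α) :
    ∃ z1 z2 : ℝ, 0 ≤ z1 ∧ z1 ≤ z2 ∧ z2 ≤ 1 ∧
      p * z1 + (1 - p) * z2 = p * y1 + (1 - p) * y2 ∧ (z1 = 0 ∨ z2 = 1) ∧
      α ≤ 1 - x1 * z1 - x2 * z2 + x2 * z1 := by
  obtain ⟨Y, hY⟩ : ∃ Y, Y = p * y1 + (1 - p) * y2 := ⟨_, rfl⟩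
  have hY0 : 0 ≤ Y := by rw [hY]; nlinarith
  have hY1 : Y ≤ 1 := by rw [hY]; nlinarith
  have e1 : y1 = Y - (1 - p) * (y2 - y1) := by rw [hY]; ring
  have hα' : α ≤ 1 - x1 * Y + (y2 - y1) * ((1 - p) * x1 - x2) := by
    have : x1 * Y = x1 * y1 + (1 - p) * (y2 - y1) * x1 := by rw [hY]; ring
    nlinarith
  rw [← hY] at hR ⊢
  have hm : 0 < (1 - p) * x1 - x2 := by
    by_contra hm
    have h1 : (y2 - y1) * ((1 - p) * x1 - x2) ≤ 0 :=
      mul_nonpos_of_nonneg_of_nonpos (by linarith) (by linarith)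
    have h2 : (p * x1 + (1 - p) * x2) * Y ≤ x1 * Y :=
      mul_le_mul_of_nonneg_right (by nlinarith) hY0
    linarith
  have hp1' : p < 1 := by
    rcases lt_or_eq_of_le hp1 with h | h
    · exact h
    · rw [h] at hm; linarith
  -- It suffices to enlarge the gap between the two values while keeping their mean `Y`.
  have key : ∀ z1 z2 : ℝ, p * z1 + (1 - p) * z2 = Y → y2 - y1 ≤ z2 - z1 →
      α ≤ 1 - x1 * z1 - x2 * z2 + x2 * z1 := by
    intro z1 z2 hz hd
    have := mul_le_mul_of_nonneg_right hd hm.le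
    have e : x1 * Y = x1 * z1 + (1 - p) * (z2 - z1) * x1 := by rw [← hz]; ring
    nlinarith
  rcases le_or_gt Y (1 - p) with h | h
  · have hz : p * 0 + (1 - p) * (Y / (1 - p)) = Y := by
      rw [mul_zero, zero_add, mul_div_cancel₀ _ (by linarith)]
    refine ⟨0, Y / (1 - p), le_rfl, div_nonneg hY0 (by linarith),
      (div_le_one (by linarith)).2 h, hz, Or.inl rfl, key _ _ hz ?_⟩
    rw [sub_zero, le_div_iff₀ (by linarith)]
    linarith
  · have hp : 0 < p := by linarith
    have hz : p * ((Y - (1 - p)) / p) + (1 - p) * 1 = Y := by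
      rw [mul_div_cancel₀ _ hp.ne']; ring
    have hle : (Y - (1 - p)) / p ≤ y1 := by
      rw [div_le_iff₀ hp, hY]; nlinarith
    exact ⟨(Y - (1 - p)) / p, 1, div_nonneg (by linarith) hp0, by linarith, le_rfl, hz,
      Or.inr rfl, key _ _ hz (by linarith)⟩

/-- The boundary case `x2 = 0`, `y2 = 1`: the two hypotheses factor, and give
`y * (1 + x) > 1` and `y * (1 + p) < p`, that is `y > 1 / 2` and `y < 1 / 2`. -/
lemma mixed {p x y α : ℝ} (hp0 : 0 ≤ p) (hp1 : p ≤ 1) (hx0 : 0 ≤ x) (hx1 : x ≤ 1)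
    (hα : α ≤ 1 - x * y)
    (h1 : 1 < α * (p * x) + (p * y + (1 - p)))
    (h3 : 1 < (p * x) * (p * y + (1 - p)) + α) : False := by
  have h1' : 1 < (1 - x * y) * (p * x) + (p * y + (1 - p)) := by
    have := mul_le_mul_of_nonneg_right hα (mul_nonneg hp0 hx0)
    linarith
  have a : 0 < p * ((1 - x) * (y * (1 + x) - 1)) := by linarith
  have b : 0 < x * ((1 - p) * (p - y * (1 + p))) := by nlinarith
  have a' : 0 < y * (1 + x) - 1 :=
    pos_of_mul_pos_right (pos_of_mul_pos_right a hp0) (by linarith)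
  have b' : 0 < p - y * (1 + p) :=
    pos_of_mul_pos_right (pos_of_mul_pos_right b hx0) (by linarith)
  nlinarith

/-- The extreme oppositely ordered configurations, in which `y1 = 0 ∨ y2 = 1` and
`x2 = 0 ∨ x1 = 1`. -/
lemma anti_final {p x1 x2 y1 y2 α : ℝ} (hp0 : 0 ≤ p) (hp1 : p ≤ 1)
    (hx2 : 0 ≤ x2) (hx : x2 ≤ x1) (hx1 : x1 ≤ 1)
    (hy1 : 0 ≤ y1) (hy : y1 ≤ y2) (hy2 : y2 ≤ 1)
    (hα : α ≤ 1 - x1 * y1 - x2 * y2 + x2 * y1)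
    (hye : y1 = 0 ∨ y2 = 1) (hxe : x2 = 0 ∨ x1 = 1)
    (h1 : 1 < α * (p * x1 + (1 - p) * x2) + (p * y1 + (1 - p) * y2))
    (h2 : 1 < α * (p * y1 + (1 - p) * y2) + (p * x1 + (1 - p) * x2))
    (h3 : 1 < (p * x1 + (1 - p) * x2) * (p * y1 + (1 - p) * y2) + α) : False := by
  have hX : 0 ≤ p * x1 + (1 - p) * x2 := by nlinarith
  have hY : 0 ≤ p * y1 + (1 - p) * y2 := by nlinarith
  rcases hye with rfl | rfl <;> rcases hxe with rfl | rfl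
  · have : α * (p * x1 + (1 - p) * 0) ≤ 1 * (p * x1 + (1 - p) * 0) :=
      mul_le_mul_of_nonneg_right (by linarith) hX
    nlinarith
  · refine mixed (p := 1 - p) (x := y2) (y := x2) (α := α) ?_ ?_ hy hy2 ?_ ?_ ?_ <;>
      nlinarith
  · refine mixed (p := p) (x := x1) (y := y1) (α := α) hp0 hp1 hx hx1 ?_ ?_ ?_ <;>
      nlinarith
  · have hα' : α ≤ (1 - y1) * (1 - x2) := by linarith
    have g1 := mul_le_mul_of_nonneg_right hα' hX
    have g2 := mul_le_mul_of_nonneg_right hα' hY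
    have a : 0 < (1 - y1) * (x2 * ((1 - p) * (1 - x2) - p)) := by nlinarith
    have b : 0 < (1 - x2) * (y1 * (p * (1 - y1) - (1 - p))) := by nlinarith
    have a' : 0 < (1 - p) * (1 - x2) - p :=
      pos_of_mul_pos_right (pos_of_mul_pos_right a (by linarith)) hx2
    have b' : 0 < p * (1 - y1) - (1 - p) :=
      pos_of_mul_pos_right (pos_of_mul_pos_right b (by linarith)) hy1
    nlinarith

/-- No point of the region comes from two vertices whose degrees are oppositely ordered. -/
lemma anti {p x1 x2 y1 y2 α : ℝ} (hp0 : 0 ≤ p) (hp1 : p ≤ 1)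
    (hx2 : 0 ≤ x2) (hx : x2 ≤ x1) (hx1 : x1 ≤ 1)
    (hy1 : 0 ≤ y1) (hy : y1 ≤ y2) (hy2 : y2 ≤ 1)
    (hα : α ≤ 1 - x1 * y1 - x2 * y2 + x2 * y1)
    (h1 : 1 < α * (p * x1 + (1 - p) * x2) + (p * y1 + (1 - p) * y2))
    (h2 : 1 < α * (p * y1 + (1 - p) * y2) + (p * x1 + (1 - p) * x2))
    (h3 : 1 < (p * x1 + (1 - p) * x2) * (p * y1 + (1 - p) * y2) + α) : False := by
  obtain ⟨z1, z2, hz1, hz, hz2, eY, hze, hα'⟩ := slide hp0 hp1 hx hx2 hy1 hy hy2 hα h3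
  rw [← eY] at h1 h2 h3
  -- The configuration is symmetric under exchanging `p` with `1 - p`, `x1` with `z2`
  -- and `x2` with `z1`.
  obtain ⟨u2, u1, hu2, hu, hu1, eX, hue, hα''⟩ :=
    slide (p := 1 - p) (x1 := z2) (x2 := z1) (y1 := x2) (y2 := x1) (α := α)
      (by linarith) (by linarith) hz hz1 hx2 hx hx1 (by linarith) (by nlinarith)
  have eX' : p * u1 + (1 - p) * u2 = p * x1 + (1 - p) * x2 := by linarith
  rw [← eX'] at h1 h2 h3
  exact anti_final hp0 hp1 hu2 hu hu1 hz1 hz hz2 (by linarith) hze hue h1 h2 h3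

/-- No point of the region comes from two vertices, of weights `p` and `1 - p`, with degrees
`x1`, `x2` into one class and `y1`, `y2` into the other, when the density `α` between these two
classes obeys the inclusion–exclusion bound for the union of two edgeless rectangles. -/
lemma two_point {p x1 x2 y1 y2 α : ℝ} (hp0 : 0 ≤ p) (hp1 : p ≤ 1)
    (hx1 : 0 ≤ x1) (hx1' : x1 ≤ 1) (hx2 : 0 ≤ x2) (hx2' : x2 ≤ 1)
    (hy1 : 0 ≤ y1) (hy1' : y1 ≤ 1) (hy2 : 0 ≤ y2) (hy2' : y2 ≤ 1)
    (hα : α ≤ 1 - x1 * y1 - x2 * y2 + min x1 x2 * min y1 y2)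
    (h1 : 1 < α * (p * x1 + (1 - p) * x2) + (p * y1 + (1 - p) * y2))
    (h2 : 1 < α * (p * y1 + (1 - p) * y2) + (p * x1 + (1 - p) * x2))
    (h3 : 1 < (p * x1 + (1 - p) * x2) * (p * y1 + (1 - p) * y2) + α) : False := by
  have hX : 0 ≤ p * x1 + (1 - p) * x2 := by nlinarith
  have hY : 0 ≤ p * y1 + (1 - p) * y2 := by nlinarith
  rcases le_total x1 x2 with hx | hx <;> rcases le_total y1 y2 with hy | hy
  · rw [min_eq_left hx, min_eq_left hy] at hα
    have := mul_le_mul (show p * x1 + (1 - p) * x2 ≤ x2 by nlinarith)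
      (show p * y1 + (1 - p) * y2 ≤ y2 by nlinarith) hY hx2
    linarith
  · rw [min_eq_left hx, min_eq_right hy] at hα
    refine anti (p := 1 - p) (x1 := x2) (x2 := x1) (y1 := y2) (y2 := y1) (α := α)
      (by linarith) (by linarith) hx1 hx hx2' hy2 hy hy1' (by linarith) ?_ ?_ ?_ <;> linarith
  · rw [min_eq_right hx, min_eq_left hy] at hα
    exact anti hp0 hp1 hx2 hx hx1' hy1 hy hy2' hα h1 h2 h3
  · rw [min_eq_right hx, min_eq_right hy] at hα
    have := mul_le_mul (show p * x1 + (1 - p) * x2 ≤ x1 by nlinarith)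
      (show p * y1 + (1 - p) * y2 ≤ y1 by nlinarith) hY hx1
    linarith

/-- Over the abscissa of the barycentre of finitely many weighted points in the plane, some chord
between two of the points passes through or above the barycentre. -/
lemma exists_chord {ι : Type*} (A : Finset ι) (w x y : ι → ℝ) (hw : ∀ a ∈ A, 0 ≤ w a)
    (hw1 : ∑ a ∈ A, w a = 1) :
    ∃ a ∈ A, ∃ b ∈ A, ∃ p : ℝ, 0 ≤ p ∧ p ≤ 1 ∧
      p * x a + (1 - p) * x b = ∑ c ∈ A, w c * x c ∧
      ∑ c ∈ A, w c * y c ≤ p * y a + (1 - p) * y b := by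
  obtain ⟨X, hX⟩ : ∃ X, X = ∑ c ∈ A, w c * x c := ⟨_, rfl⟩
  obtain ⟨Y, hY⟩ : ∃ Y, Y = ∑ c ∈ A, w c * y c := ⟨_, rfl⟩
  rw [← hX, ← hY]
  have cX : ∑ c ∈ A, w c * (x c - X) = 0 := by
    simp only [mul_sub, Finset.sum_sub_distrib, ← Finset.sum_mul, hw1, ← hX]; ring
  have cY : ∑ c ∈ A, w c * (y c - Y) = 0 := by
    simp only [mul_sub, Finset.sum_sub_distrib, ← Finset.sum_mul, hw1, ← hY]; ring
  set L := A.filter (fun c => x c ≤ X) with hL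
  set U := A.filter (fun c => ¬ x c ≤ X) with hU
  have sX := Finset.sum_filter_add_sum_filter_not A (fun c => x c ≤ X)
    (fun c => w c * (x c - X))
  have sY := Finset.sum_filter_add_sum_filter_not A (fun c => x c ≤ X)
    (fun c => w c * (y c - Y))
  rw [cX, ← hL, ← hU] at sX
  rw [cY, ← hL, ← hU] at sY
  obtain ⟨D, hD⟩ : ∃ D, D = ∑ c ∈ U, w c * (x c - X) := ⟨_, rfl⟩
  have hDL : ∑ c ∈ L, w c * (X - x c) = D := by
    have : ∑ c ∈ L, w c * (X - x c) = - ∑ c ∈ L, w c * (x c - X) := by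
      rw [← Finset.sum_neg_distrib]; exact Finset.sum_congr rfl (fun c _ => by ring)
    linarith
  have hUn : ∀ c ∈ U, 0 ≤ w c * (x c - X) := by
    intro c hc
    rw [hU, Finset.mem_filter] at hc
    exact mul_nonneg (hw c hc.1) (by linarith [not_le.1 hc.2])
  have hLn : ∀ c ∈ L, 0 ≤ w c * (X - x c) := by
    intro c hc
    rw [hL, Finset.mem_filter] at hc
    exact mul_nonneg (hw c hc.1) (by linarith)
  rcases (hD ▸ Finset.sum_nonneg hUn : 0 ≤ D).eq_or_lt with h0 | hpos
  · -- All the mass sits at abscissa `X`; a single point of height at least `Y` is enough.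
    have zU := (Finset.sum_eq_zero_iff_of_nonneg hUn).1 (hD.symm.trans h0.symm)
    have zL := (Finset.sum_eq_zero_iff_of_nonneg hLn).1 (hDL.trans h0.symm)
    obtain ⟨a, ha, hwa, hya⟩ : ∃ a ∈ A, 0 < w a ∧ Y ≤ y a := by
      by_contra hcon
      push Not at hcon
      obtain ⟨b, hb, hwb⟩ : ∃ b ∈ A, w b ≠ 0 :=
        Finset.exists_ne_zero_of_sum_ne_zero (by rw [hw1]; exact one_ne_zero)
      have hwb' : 0 < w b := lt_of_le_of_ne (hw b hb) hwb.symm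
      have : ∑ c ∈ A, w c * (y c - Y) < 0 := by
        refine Finset.sum_neg' (fun c hc => ?_) ⟨b, hb, ?_⟩
        · rcases (hw c hc).eq_or_lt with h | h
          · rw [← h, zero_mul]
          · exact mul_nonpos_of_nonneg_of_nonpos h.le (by linarith [hcon c hc h])
        · exact mul_neg_of_pos_of_neg hwb' (by linarith [hcon b hb hwb'])
      linarith
    have hxa : x a = X := by
      by_cases h : x a ≤ X
      · have := zL a (by rw [hL, Finset.mem_filter]; exact ⟨ha, h⟩)
        rcases mul_eq_zero.1 this with h | h <;> linarith
      · have := zU a (by rw [hU, Finset.mem_filter]; exact ⟨ha, h⟩)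
        rcases mul_eq_zero.1 this with h | h <;> linarith
    exact ⟨a, ha, a, ha, 1, by norm_num, le_rfl, by rw [hxa]; ring, by linarith⟩
  · -- Up to a positive factor, the bracket below is the height over `Y` of the chord from `a`
    -- to `b` at abscissa `X`. Its weighted sum over all pairs vanishes, so one is nonnegative.
    have hsum : ∑ a ∈ L, ∑ b ∈ U,
        (w a * w b) * ((x b - X) * (y a - Y) + (X - x a) * (y b - Y)) = 0 := by
      calc _ = ∑ a ∈ L, (w a * (y a - Y) * D
                + w a * (X - x a) * ∑ b ∈ U, w b * (y b - Y)) := by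
            refine Finset.sum_congr rfl (fun a _ => ?_)
            rw [hD, Finset.mul_sum, Finset.mul_sum, ← Finset.sum_add_distrib]
            exact Finset.sum_congr rfl (fun b _ => by ring)
        _ = (∑ a ∈ L, w a * (y a - Y)) * D + D * ∑ b ∈ U, w b * (y b - Y) := by
            rw [Finset.sum_add_distrib, ← Finset.sum_mul, ← Finset.sum_mul, hDL]
        _ = D * (∑ a ∈ L, w a * (y a - Y) + ∑ b ∈ U, w b * (y b - Y)) := by ring
        _ = 0 := by rw [sY, mul_zero]
    have hwL : ∃ a ∈ L, 0 < w a := by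
      by_contra hcon
      push Not at hcon
      have : ∑ c ∈ L, w c * (X - x c) ≤ 0 := Finset.sum_nonpos (fun c hc =>
        mul_nonpos_of_nonpos_of_nonneg (hcon c hc)
          (by rw [hL, Finset.mem_filter] at hc; linarith [hc.2]))
      linarith
    have hwU : ∃ a ∈ U, 0 < w a := by
      by_contra hcon
      push Not at hcon
      have : ∑ c ∈ U, w c * (x c - X) ≤ 0 := Finset.sum_nonpos (fun c hc =>
        mul_nonpos_of_nonpos_of_nonneg (hcon c hc)
          (by rw [hU, Finset.mem_filter] at hc; linarith [not_le.1 hc.2]))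
      linarith
    obtain ⟨a, ha, b, hb, hab⟩ : ∃ a ∈ L, ∃ b ∈ U,
        0 ≤ (x b - X) * (y a - Y) + (X - x a) * (y b - Y) := by
      by_contra hcon
      push Not at hcon
      obtain ⟨a0, ha0, hwa0⟩ := hwL
      obtain ⟨b0, hb0, hwb0⟩ := hwU
      have hwn : ∀ a ∈ L, ∀ b ∈ U, 0 ≤ w a * w b := fun a ha b hb =>
        mul_nonneg (hw a (Finset.mem_filter.1 ha).1) (hw b (Finset.mem_filter.1 hb).1)
      have hle : ∀ a ∈ L, ∀ b ∈ U,
          (w a * w b) * ((x b - X) * (y a - Y) + (X - x a) * (y b - Y)) ≤ 0 :=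
        fun a ha b hb =>
          mul_nonpos_of_nonneg_of_nonpos (hwn a ha b hb) (hcon a ha b hb).le
      have := Finset.sum_neg' (s := L) (f := fun a => ∑ b ∈ U,
        (w a * w b) * ((x b - X) * (y a - Y) + (X - x a) * (y b - Y)))
        (fun a ha => Finset.sum_nonpos (hle a ha))
        ⟨a0, ha0, Finset.sum_neg' (hle a0 ha0) ⟨b0, hb0,
          mul_neg_of_pos_of_neg (mul_pos hwa0 hwb0) (hcon a0 ha0 b0 hb0)⟩⟩
      linarith
    rw [hL, Finset.mem_filter] at ha
    rw [hU, Finset.mem_filter, not_le] at hb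
    have hd : 0 < x b - x a := by linarith [ha.2, hb.2]
    have hq : 1 - (x b - X) / (x b - x a) = (X - x a) / (x b - x a) := by
      field_simp; ring
    refine ⟨a, ha.1, b, hb.1, (x b - X) / (x b - x a), div_nonneg (by linarith) hd.le,
      (div_le_one hd).2 (by linarith [ha.2]), ?_, ?_⟩
    · rw [hq]; field_simp; ring
    · rw [hq, div_mul_eq_mul_div, div_mul_eq_mul_div, ← add_div, le_div_iff₀ hd]
      linarith

/-- Vertices `a` with weights `w a` and degrees `x a`, `y a` cannot realise average degrees at
least `β` and `γ` with `(α, β, γ)` in the region, if the bound on `α` holds for every pair: the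
averages can be replaced by those of just two vertices. -/
lemma not_region {ι : Type*} (A : Finset ι) (w x y : ι → ℝ) {α : ℝ} (hα0 : 0 ≤ α)
    (hw : ∀ a ∈ A, 0 ≤ w a) (hw1 : ∑ a ∈ A, w a = 1)
    (hx : ∀ a ∈ A, 0 ≤ x a ∧ x a ≤ 1) (hy : ∀ a ∈ A, 0 ≤ y a ∧ y a ≤ 1)
    (hα : ∀ a ∈ A, ∀ b ∈ A,
      α ≤ 1 - x a * y a - x b * y b + min (x a) (x b) * min (y a) (y b))
    {β γ : ℝ} (hβ0 : 0 ≤ β) (hβ : β ≤ ∑ a ∈ A, w a * x a)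
    (hγ0 : 0 ≤ γ) (hγ : γ ≤ ∑ a ∈ A, w a * y a)
    (h1 : 1 < α * β + γ) (h2 : 1 < α * γ + β) (h3 : 1 < β * γ + α) : False := by
  obtain ⟨a, ha, b, hb, p, hp0, hp1, hX, hY⟩ := exists_chord A w x y hw hw1
  have hβ' := hβ.trans hX.ge
  have hγ' := hγ.trans hY
  have m1 := mul_le_mul_of_nonneg_left hβ' hα0
  have m2 := mul_le_mul_of_nonneg_left hγ' hα0
  have m3 := mul_le_mul hβ' hγ' hγ0 (hβ0.trans hβ')
  exact two_point hp0 hp1 (hx a ha).1 (hx a ha).2 (hx b hb).1 (hx b hb).2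
    (hy a ha).1 (hy a ha).2 (hy b hb).1 (hy b hb).2 (hα a ha b hb)
    (by linarith) (by linarith) (by linarith)

/-! ### Lower bound on the triangle density in the region -/

/-- Indicator of adjacency. -/
noncomputable def ind {n : ℕ} (G : TriGraph n) (u v : Fin n) : ℝ :=
  if G.adj u v then 1 else 0

/-- Weighted number of triangles through `a`, where `a` is meant to lie in class `0`. -/
noncomputable def triAt {n : ℕ} (G : TriGraph n) (w : Fin n → ℝ) (a : Fin n) : ℝ :=
  ∑ b ∈ classSet G 1, ∑ c ∈ classSet G 2, w b * w c * (ind G a b * ind G a c * ind G b c)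

/-- Adjacency indicator of the graph in which the vertices `a` with `triAt G w a > s` have
been isolated. -/
noncomputable def trimInd {n : ℕ} (G : TriGraph n) (w : Fin n → ℝ) (s : ℝ) (a v : Fin n) : ℝ :=
  if triAt G w a ≤ s then ind G a v else 0

lemma ind_eq {n : ℕ} (G : TriGraph n) (u v : Fin n) : ind G u v = 0 ∨ ind G u v = 1 := by
  unfold ind; split_ifs <;> simp

lemma trimInd_eq {n : ℕ} (G : TriGraph n) (w : Fin n → ℝ) (s : ℝ) (a v : Fin n) :
    trimInd G w s a v = 0 ∨ trimInd G w s a v = 1 := by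
  unfold trimInd; split_ifs
  · exact ind_eq G a v
  · exact Or.inl rfl

lemma ind_nonneg {n : ℕ} (G : TriGraph n) (u v : Fin n) : 0 ≤ ind G u v := by
  rcases ind_eq G u v with h | h <;> simp [h]

lemma edgeDensity_eq {n : ℕ} (G : TriGraph n) (w : Fin n → ℝ) (i j : Fin 3) :
    edgeDensity G w i j = ∑ u ∈ classSet G i, w u * ∑ v ∈ classSet G j, w v * ind G u v := by
  unfold edgeDensity ind
  refine Finset.sum_congr rfl (fun u _ => ?_)
  rw [Finset.mul_sum]
  refine Finset.sum_congr rfl (fun v _ => ?_)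
  split_ifs <;> ring

lemma triDensity_eq {n : ℕ} (G : TriGraph n) (w : Fin n → ℝ) :
    triDensity G w = ∑ a ∈ classSet G 0, w a * triAt G w a := by
  unfold triDensity triAt ind
  refine Finset.sum_congr rfl (fun a _ => ?_)
  rw [Finset.mul_sum]
  refine Finset.sum_congr rfl (fun b _ => ?_)
  rw [Finset.mul_sum]
  refine Finset.sum_congr rfl (fun c _ => ?_)
  cases G.adj a b <;> cases G.adj a c <;> cases G.adj b c <;> simp <;> ring

lemma triAt_nonneg {n : ℕ} {G : TriGraph n} (W : Weighting G) (a : Fin n) :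
    0 ≤ triAt G W.w a :=
  Finset.sum_nonneg fun b _ => Finset.sum_nonneg fun c _ =>
    mul_nonneg (mul_nonneg (W.nonneg b) (W.nonneg c))
      (mul_nonneg (mul_nonneg (ind_nonneg G a b) (ind_nonneg G a c)) (ind_nonneg G b c))

lemma triDensity_nonneg {n : ℕ} {G : TriGraph n} (W : Weighting G) :
    0 ≤ triDensity G W.w := by
  rw [triDensity_eq]
  exact Finset.sum_nonneg fun a _ => mul_nonneg (W.nonneg a) (triAt_nonneg W a)

/-- Weight of the neighbourhood of `a` in class `j`, in the trimmed graph. -/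
noncomputable def trimDeg {n : ℕ} (G : TriGraph n) (w : Fin n → ℝ) (s : ℝ) (j : Fin 3)
    (a : Fin n) : ℝ :=
  ∑ v ∈ classSet G j, w v * trimInd G w s a v

lemma trimDeg_mem {n : ℕ} {G : TriGraph n} (W : Weighting G) (s : ℝ) (j : Fin 3) (a : Fin n) :
    0 ≤ trimDeg G W.w s j a ∧ trimDeg G W.w s j a ≤ 1 := by
  constructor
  · refine Finset.sum_nonneg fun v _ => mul_nonneg (W.nonneg v) ?_
    rcases trimInd_eq G W.w s a v with h | h <;> simp [h]
  · rw [← W.sum_one j]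
    refine Finset.sum_le_sum fun v _ => ?_
    have := W.nonneg v
    rcases trimInd_eq G W.w s a v with h | h <;> simp [h, this]

lemma common_le_min {n : ℕ} {G : TriGraph n} (W : Weighting G) (s : ℝ) (j : Fin 3)
    (a a' : Fin n) :
    ∑ v ∈ classSet G j, W.w v * (trimInd G W.w s a v * trimInd G W.w s a' v) ≤
      min (trimDeg G W.w s j a) (trimDeg G W.w s j a') := by
  refine le_min ?_ ?_ <;> refine Finset.sum_le_sum fun v _ => ?_ <;>
  · have := W.nonneg v
    rcases trimInd_eq G W.w s a v with h | h <;>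
    rcases trimInd_eq G W.w s a' v with h' | h' <;> simp [h, h', this]

lemma trim_tri_le {n : ℕ} {G : TriGraph n} (W : Weighting G) {s : ℝ} (hs : 0 ≤ s) (a : Fin n) :
    ∑ b ∈ classSet G 1, ∑ c ∈ classSet G 2,
      W.w b * W.w c * (trimInd G W.w s a b * trimInd G W.w s a c * ind G b c) ≤ s := by
  unfold trimInd
  split_ifs with h
  · exact h
  · simpa using hs

/-- By Markov's inequality, isolating the vertices `a` with `triAt G w a > s` costs at most `s`
in edge density. -/
lemma trim_density {n : ℕ} {G : TriGraph n} (W : Weighting G) {s : ℝ} (hs : 0 < s)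
    (ht : triDensity G W.w < s ^ 2) (j : Fin 3) :
    edgeDensity G W.w 0 j - s ≤ ∑ a ∈ classSet G 0, W.w a * trimDeg G W.w s j a := by
  have hbad : s * (edgeDensity G W.w 0 j - ∑ a ∈ classSet G 0, W.w a * trimDeg G W.w s j a)
      ≤ triDensity G W.w := by
    rw [edgeDensity_eq, triDensity_eq, ← Finset.sum_sub_distrib, Finset.mul_sum]
    refine Finset.sum_le_sum fun a _ => ?_
    have hw := W.nonneg a
    unfold trimDeg trimInd
    by_cases h : triAt G W.w a ≤ s
    · simp only [h, if_true, sub_self, mul_zero]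
      exact mul_nonneg hw (triAt_nonneg W a)
    · simp only [h, if_false, mul_zero, Finset.sum_const_zero, sub_zero]
      have h1 : ∑ v ∈ classSet G j, W.w v * ind G a v ≤ 1 := by
        rw [← W.sum_one j]
        refine Finset.sum_le_sum fun v _ => ?_
        have := W.nonneg v
        rcases ind_eq G a v with h | h <;> simp [h, this]
      have h2 : s * ∑ v ∈ classSet G j, W.w v * ind G a v ≤ triAt G W.w a := by nlinarith
      nlinarith
  nlinarith

/-- With `B_a`, `C_a` the neighbourhoods of `a` in the trimmed graph, `B_a × C_a ∪ B_a' × C_a'`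
carries edges of density at most `2 * s`; the measure of this union comes from
inclusion–exclusion. -/
lemma opposite_density {n : ℕ} {G : TriGraph n} (W : Weighting G) {s : ℝ} (hs : 0 ≤ s)
    (a a' : Fin n) :
    edgeDensity G W.w 1 2 - 2 * s ≤
      1 - trimDeg G W.w s 2 a * trimDeg G W.w s 1 a
        - trimDeg G W.w s 2 a' * trimDeg G W.w s 1 a'
        + min (trimDeg G W.w s 2 a) (trimDeg G W.w s 2 a')
          * min (trimDeg G W.w s 1 a) (trimDeg G W.w s 1 a') := by
  set f := trimInd G W.w s with hf
  have hpt : ∀ b c, ind G b c ≤ 1 - f a b * f a c - f a' b * f a' c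
      + (f a b * f a' b) * (f a c * f a' c)
      + f a b * f a c * ind G b c + f a' b * f a' c * ind G b c := by
    intro b c
    rcases ind_eq G b c with h | h <;> rcases trimInd_eq G W.w s a b with h1 | h1 <;>
    rcases trimInd_eq G W.w s a c with h2 | h2 <;>
    rcases trimInd_eq G W.w s a' b with h3 | h3 <;>
    rcases trimInd_eq G W.w s a' c with h4 | h4 <;>
    simp only [hf, h, h1, h2, h3, h4] <;> norm_num
  have hprod : ∀ g k : Fin n → ℝ,
      ∑ b ∈ classSet G 1, ∑ c ∈ classSet G 2, W.w b * W.w c * (g b * k c)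
        = (∑ c ∈ classSet G 2, W.w c * k c) * ∑ b ∈ classSet G 1, W.w b * g b := by
    intro g k
    rw [mul_comm, Finset.sum_mul_sum]
    exact Finset.sum_congr rfl fun b _ => Finset.sum_congr rfl fun c _ => by ring
  have hsum : edgeDensity G W.w 1 2 ≤
      ∑ b ∈ classSet G 1, ∑ c ∈ classSet G 2, (W.w b * W.w c * ((1:ℝ) * 1)
        - W.w b * W.w c * (f a b * f a c) - W.w b * W.w c * (f a' b * f a' c)
        + W.w b * W.w c * ((f a b * f a' b) * (f a c * f a' c))
        + W.w b * W.w c * (f a b * f a c * ind G b c)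
        + W.w b * W.w c * (f a' b * f a' c * ind G b c)) := by
    rw [edgeDensity_eq]
    refine Finset.sum_le_sum fun b _ => ?_
    rw [Finset.mul_sum]
    refine Finset.sum_le_sum fun c _ => ?_
    have := mul_le_mul_of_nonneg_left (hpt b c) (mul_nonneg (W.nonneg b) (W.nonneg c))
    linarith
  simp only [Finset.sum_add_distrib, Finset.sum_sub_distrib] at hsum
  rw [hprod (fun _ => 1) (fun _ => 1), hprod (f a) (f a), hprod (f a') (f a'),
    hprod (fun b => f a b * f a' b) (fun c => f a c * f a' c)] at hsum
  simp only [mul_one, W.sum_one] at hsum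
  have hmin := mul_le_mul (common_le_min W s 2 a a') (common_le_min W s 1 a a')
    (Finset.sum_nonneg fun v _ => mul_nonneg (W.nonneg v) (by
      rcases trimInd_eq G W.w s a v with h | h <;>
      rcases trimInd_eq G W.w s a' v with h' | h' <;> simp [h, h']))
    (le_min (trimDeg_mem W s 2 a).1 (trimDeg_mem W s 2 a').1)
  have t1 := trim_tri_le W hs a
  have t2 := trim_tri_le W hs a'
  unfold trimDeg at hmin ⊢
  rw [← hf] at hmin t1 t2 ⊢
  linarith

/-- In the region `R` the triangle density is bounded below by a positive constant depending
only on the edge densities. -/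
lemma tri_lower {α β γ : ℝ} (h : inR α β γ) :
    ∃ s : ℝ, 0 < s ∧ ∀ (n : ℕ) (G : TriGraph n) (W : Weighting G),
      InTri G W α β γ → s ^ 2 ≤ triDensity G W.w := by
  obtain ⟨⟨⟨hα0, hα1⟩, ⟨hβ0, hβ1⟩, ⟨hγ0, hγ1⟩⟩, h1, h2, h3⟩ := h
  have pα : 0 < α := by nlinarith
  have pβ : 0 < β := by nlinarith
  have pγ : 0 < γ := by nlinarith
  -- The conditions are open, so they survive a small loss in the three densities.
  have ev : ∀ᶠ s : ℝ in nhdsWithin 0 (Set.Ioi 0), 0 < α - 2 * s ∧ 0 < β - s ∧ 0 < γ - s ∧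
      1 < (α - 2 * s) * (β - s) + (γ - s) ∧ 1 < (α - 2 * s) * (γ - s) + (β - s) ∧
      1 < (β - s) * (γ - s) + (α - 2 * s) := by
    have lt : ∀ (f : ℝ → ℝ) (c : ℝ), Continuous f → c < f 0 →
        ∀ᶠ s : ℝ in nhdsWithin 0 (Set.Ioi 0), c < f s := fun f c hf hc =>
      (hf.continuousAt.eventually_const_lt hc).filter_mono nhdsWithin_le_nhds
    refine (lt _ _ (by fun_prop) (by simpa)).and <| (lt _ _ (by fun_prop) (by simpa)).and <|
      (lt _ _ (by fun_prop) (by simpa)).and <| (lt _ _ (by fun_prop) (by simpa)).and <|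
      (lt _ _ (by fun_prop) (by simpa)).and (lt _ _ (by fun_prop) (by simpa))
  obtain ⟨s, ⟨qα, qβ, qγ, r1, r2, r3⟩, hs⟩ := (ev.and self_mem_nhdsWithin).exists
  refine ⟨s, hs, fun n G W hG => ?_⟩
  obtain ⟨eα, eβ, eγ⟩ := hG
  by_contra ht
  push Not at ht
  refine not_region (classSet G 0) W.w (trimDeg G W.w s 2) (trimDeg G W.w s 1) qα.le
    (fun a _ => W.nonneg a) (W.sum_one 0) (fun a _ => trimDeg_mem W s 2 a)
    (fun a _ => trimDeg_mem W s 1 a) (fun a _ b _ => ?_) qβ.le ?_ qγ.le ?_ r1 r2 r3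
  · exact eα ▸ opposite_density W (le_of_lt hs) a b
  · exact eβ ▸ trim_density W hs ht 2
  · exact eγ ▸ trim_density W hs ht 1

/-! ### Constructions -/

/-- Classes `{0, 1}`, `{2, 3}`, `{4, 5}`. The first vertex of each class is joined to the whole
next class in cyclic order and the second vertex to none of it, so the weights of the first
vertices are the edge densities. -/
def fullGraph : TriGraph 6 where
  cls := ![0,0,1,1,2,2]
  adj := mkAdj ![0,0,1,1,2,2] [(1,2),(1,3),(3,4),(3,5),(5,0),(5,1)]
  symm := by decide
  tripart := by decide

lemma fullGraph_class : classSet fullGraph 0 = {0, 1} ∧ classSet fullGraph 1 = {2, 3} ∧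
    classSet fullGraph 2 = {4, 5} := by decide

/-- Every point of the cube is realised, so `Tmin` is not the junk value `sInf ∅ = 0`. -/
lemma exists_inTri {α β γ : ℝ} (h : inCube α β γ) :
    ∃ (n : ℕ) (G : TriGraph n) (W : Weighting G), InTri G W α β γ := by
  obtain ⟨⟨hα0, hα1⟩, ⟨hβ0, hβ1⟩, ⟨hγ0, hγ1⟩⟩ := h
  refine ⟨6, fullGraph, ⟨![γ, 1 - γ, α, 1 - α, β, 1 - β], ?_, ?_, ?_⟩, ?_, ?_, ?_⟩
  · intro v; fin_cases v <;> simp <;> linarith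
  · intro v; fin_cases v <;> simp <;> linarith
  · intro i; fin_cases i
    · simp [fullGraph_class.1]
    · simp [fullGraph_class.2.1]
    · simp [fullGraph_class.2.2]
  all_goals
    simp only [edgeDensity, fullGraph_class]
    simp [fullGraph, mkAdj]
  all_goals ring

/-- A triangle-free graph on classes `i ∋ 0, 1`, `j ∋ 2, 3, 4, 5`, `k ∋ 6`. The only vertex `6`
of class `k` is adjacent to `0`, `2` and `4`. All pairs between classes `i` and `j` that do not
form a triangle with `6` are joined, except that `4` and `5`, which duplicate `2` and `3`, are
isolated from class `i`; splitting the weight between a vertex and its duplicate tunes the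
density between `i` and `j`. The adjacency does not depend on `i`, `j`, `k`. -/
def zeroGraph (i j k : Fin 3) (hij : i ≠ j) (hik : i ≠ k) (hjk : j ≠ k) : TriGraph 7 where
  cls := ![i,i,j,j,j,j,k]
  adj := mkAdj ![0,0,1,1,1,1,2] [(0,2),(0,4),(0,5),(1,4),(1,5),(1,6),(3,6),(5,6)]
  symm := by decide
  tripart := by revert i j k; decide

lemma zeroGraph_tri (i j k : Fin 3) (hij : i ≠ j) (hik : i ≠ k) (hjk : j ≠ k)
    (w : Fin 7 → ℝ) : triDensity (zeroGraph i j k hij hik hjk) w = 0 := by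
  have key : ∀ a b c : Fin 7, ¬ ((zeroGraph i j k hij hik hjk).adj a b &&
      (zeroGraph i j k hij hik hjk).adj a c && (zeroGraph i j k hij hik hjk).adj b c) = true := by
    have : ∀ a b c : Fin 7, ¬ ((zeroGraph 0 1 2 (by decide) (by decide) (by decide)).adj a b &&
      (zeroGraph 0 1 2 (by decide) (by decide) (by decide)).adj a c &&
      (zeroGraph 0 1 2 (by decide) (by decide) (by decide)).adj b c) = true := by
      decide
    exact this
  unfold triDensity
  exact Finset.sum_eq_zero fun a _ => Finset.sum_eq_zero fun b _ => Finset.sum_eq_zero fun c _ =>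
    if_neg (key a b c)

lemma edgeDensity_comm {n : ℕ} (G : TriGraph n) (w : Fin n → ℝ) (i j : Fin 3) :
    edgeDensity G w i j = edgeDensity G w j i := by
  unfold edgeDensity
  rw [Finset.sum_comm]
  refine Finset.sum_congr rfl fun u _ => Finset.sum_congr rfl fun v _ => ?_
  rw [G.symm u v, mul_comm]

lemma zeroGraph_class (i j k : Fin 3) (hij : i ≠ j) (hik : i ≠ k) (hjk : j ≠ k) :
    classSet (zeroGraph i j k hij hik hjk) i = {0, 1} ∧
    classSet (zeroGraph i j k hij hik hjk) j = {2, 3, 4, 5} ∧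
    classSet (zeroGraph i j k hij hik hjk) k = {6} := by
  revert i j k; decide

lemma zeroGraph_spec (i j k : Fin 3) (hij : i ≠ j) (hik : i ≠ k) (hjk : j ≠ k)
    {x y z : ℝ} (hx : x ∈ Set.Icc (0:ℝ) 1) (hy : y ∈ Set.Icc (0:ℝ) 1)
    (hz : 0 ≤ z) (h : x * y + z ≤ 1) :
    ∃ W : Weighting (zeroGraph i j k hij hik hjk),
      edgeDensity (zeroGraph i j k hij hik hjk) W.w j k = x ∧
      edgeDensity (zeroGraph i j k hij hik hjk) W.w i k = y ∧
      edgeDensity (zeroGraph i j k hij hik hjk) W.w i j = z := by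
  obtain ⟨hA, hB, hC⟩ := zeroGraph_class i j k hij hik hjk
  obtain ⟨hx0, hx1⟩ := hx
  obtain ⟨hy0, hy1⟩ := hy
  -- `s` is the share of class `j` that keeps its edges to class `i`.
  obtain ⟨s, hs0, hs1, hs⟩ : ∃ s : ℝ, 0 ≤ s ∧ s ≤ 1 ∧ s * (1 - x * y) = z := by
    rcases (show 0 ≤ 1 - x * y by linarith).eq_or_lt with h0 | h0
    · exact ⟨0, le_rfl, zero_le_one, by linarith⟩
    · exact ⟨z / (1 - x * y), div_nonneg hz h0.le, (div_le_one h0).2 (by linarith),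
        div_mul_cancel₀ _ h0.ne'⟩
  have hs0' : 0 ≤ 1 - s := by linarith
  have hx0' : 0 ≤ 1 - x := by linarith
  have hy0' : 0 ≤ 1 - y := by linarith
  refine ⟨⟨![y, 1 - y, s * x, s * (1 - x), (1 - s) * x, (1 - s) * (1 - x), 1], ?_, ?_, ?_⟩,
    ?_, ?_, ?_⟩
  · intro v; fin_cases v <;> simp <;> first | assumption | positivity
  · intro v; fin_cases v <;> simp <;> nlinarith
  · intro l
    have hl : l = i ∨ l = j ∨ l = k := by revert i j k l; decide
    rcases hl with rfl | rfl | rfl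
    · simp [hA]
    · simp [hB]; ring
    · simp [hC]
  all_goals
    simp only [edgeDensity, hA, hB, hC]
    simp [zeroGraph, mkAdj]
  · ring
  · rw [← hs]; ring

/-! ### The characterisation -/

/-- For all (α,β,γ) ∈ [0,1]³, T_min(α,β,γ) = 0 iff (α,β,γ) ∈ [0,1]³ \ R. -/
theorem stmt0 (α β γ : ℝ) (h : inCube α β γ) :
    Tmin α β γ = 0 ↔ ¬ inR α β γ := by
  constructor
  · intro h0 hR
    obtain ⟨s, hs, hle⟩ := tri_lower hR
    obtain ⟨n, G, W, hG⟩ := exists_inTri h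
    have : s ^ 2 ≤ Tmin α β γ := by
      refine le_csInf ⟨_, n, G, W, hG, rfl⟩ ?_
      rintro t ⟨m, G', W', hG', rfl⟩
      exact hle m G' W' hG'
    have := pow_pos hs 2
    linarith
  · intro hR
    suffices hex : ∃ (n : ℕ) (G : TriGraph n) (W : Weighting G),
        InTri G W α β γ ∧ triDensity G W.w = 0 by
      refine le_antisymm (csInf_le ⟨0, ?_⟩ hex) (le_csInf ⟨0, hex⟩ ?_) <;>
      · rintro t ⟨m, G', W', -, rfl⟩
        exact triDensity_nonneg W'
    have hR' : α * β + γ ≤ 1 ∨ α * γ + β ≤ 1 ∨ β * γ + α ≤ 1 := by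
      by_contra hcon
      push Not at hcon
      exact hR ⟨h, hcon⟩
    obtain ⟨hα, hβ, hγ⟩ := h
    rcases hR' with hc | hc | hc
    · obtain ⟨W, e1, e2, e3⟩ := zeroGraph_spec 0 1 2 (by decide) (by decide) (by decide)
        hα hβ hγ.1 hc
      exact ⟨7, _, W, ⟨e1, e2, e3⟩, zeroGraph_tri _ _ _ _ _ _ _⟩
    · obtain ⟨W, e1, e2, e3⟩ := zeroGraph_spec 0 2 1 (by decide) (by decide) (by decide)
        hα hγ hβ.1 hc
      exact ⟨7, _, W, ⟨by rw [edgeDensity_comm, e1], e3, e2⟩, zeroGraph_tri _ _ _ _ _ _ _⟩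
    · obtain ⟨W, e1, e2, e3⟩ := zeroGraph_spec 1 2 0 (by decide) (by decide) (by decide)
        hβ hγ hα.1 hc
      exact ⟨7, _, W, ⟨e3, by rw [edgeDensity_comm, e1], by rw [edgeDensity_comm, e2]⟩,
        zeroGraph_tri _ _ _ _ _ _ _⟩
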